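/- The sequence 0 → ℤ_l → Λ∧ →(1−ψ)→ Λ∧ → (Ξ/Ξ₁) ⊕ ℤ_l → 0 is exact; explicitly: the kernel of 1−ψ : Λ∧ → Λ∧ is exactly the constants ℤ_l, and the ℤ_l-linear map (Ξ ∩ Λ∧⁻) ⊕ ℤ_l → Λ∧/(1−ψ)Λ∧ sending (x, c) to the class of x + c is an isomorphism onto the cokernel of 1−ψ (note Ξ/Ξ₁ ≅ Ξ ∩ Λ∧⁻ since Ξ = (Ξ ∩ Λ∧⁻) ⊕ Ξ₁). -/

import Mathlib

open Filter

/-!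
Modulo `l` the endomorphism `ψ` is the substitution `φ : T ↦ T ^ l`. Consider the map
`(v, y) ↦ v + (1 - ψ) y`, where `y` has no constant term and `v` lies in `(Ξ ∩ Λ∧⁻) ⊕ ℤ_l`. Its
bijectivity yields both the kernel and the cokernel of `1 - ψ`, and since `Λ∧` is `l`-adically
complete, it may be checked after replacing `ψ` by `φ`. There one solves `(1 - φ) y = z` degree by
degree: `y = ∑_{i ≥ 0} φ ^ i z` in positive degrees, a sum which is finite in each degree, and
`y = -∑_{i ≥ 1} θ ^ i z` in negative degrees, where `θ : (a_k) ↦ (a_{l k})` is the left inverse of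
`φ`; the latter sum converges because the coefficients of `z` tend to `0` at `-∞`. The degrees that
are negative and prime to `l` impose no condition on `y` and are left to `v`, as is the degree `0`.
-/

open scoped Topology

section Perturbation

variable {A : Type*} [CommRing A] {I : Ideal A} {M N : Type*} [AddCommGroup M] [Module A M]
  [AddCommMonoid N] [Module A N]

lemma injective_of_apply_sub_self_mem_smul_top [IsHausdorff I M] {f : M →ₗ[A] M}
    (hf : ∀ x, f x - x ∈ (I • ⊤ : Submodule A M)) : Function.Injective f := by
  rw [injective_iff_map_eq_zero]
  intro x hx
  have hrange : LinearMap.range (f - LinearMap.id) ≤ I • ⊤ := by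
    rintro _ ⟨y, rfl⟩
    exact hf y
  refine IsHausdorff.haus' (I := I) x fun n => SModEq.zero.2 ?_
  induction n with
  | zero => simp
  | succ n ih =>
    have hmem := Submodule.mem_map_of_mem (f := f - LinearMap.id) ih
    rw [Submodule.map_smul'', Submodule.map_top] at hmem
    rw [pow_succ, mul_smul]
    simpa [hx] using Submodule.smul_mono le_rfl hrange hmem

lemma surjective_of_apply_sub_self_mem_smul_top [IsAdicComplete I M] {f : M →ₗ[A] M}
    (hf : ∀ x, f x - x ∈ (I • ⊤ : Submodule A M)) : Function.Surjective f := by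
  refine surjective_of_mkQ_comp_surjective (I := I) fun y => ?_
  obtain ⟨x, rfl⟩ := Submodule.mkQ_surjective _ y
  exact ⟨x, (Submodule.Quotient.eq _).2 (hf x)⟩

/-- Passing to `f ∘ g⁻¹` reduces to an endomorphism which is the identity modulo `I`. -/
theorem bijective_of_apply_sub_apply_mem_smul_top [IsAdicComplete I M] {f g : N →ₗ[A] M}
    (hg : Function.Bijective g) (hfg : ∀ x, f x - g x ∈ (I • ⊤ : Submodule A M)) :
    Function.Bijective f := by
  let e := LinearEquiv.ofBijective g hg
  have hfe : ∀ x, (f ∘ₗ e.symm.toLinearMap) x - x ∈ (I • ⊤ : Submodule A M) := fun x => by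
    simpa [e] using hfg (e.symm x)
  have hbij : Function.Bijective (f ∘ e.symm) :=
    ⟨injective_of_apply_sub_self_mem_smul_top hfe, surjective_of_apply_sub_self_mem_smul_top hfe⟩
  exact (Function.Bijective.of_comp_iff f e.symm.bijective).1 hbij

end Perturbation

/-- The coefficient families `(a_k)` of the two-sided series `∑ a_k T ^ k` over `A` with `a_k → 0`
as `k → -∞`. For `A = ℤ_l` this is the module underlying `Λ∧`. -/
def LaurentCoeff (A : Type*) [CommRing A] [TopologicalSpace A] [IsTopologicalRing A] :
    Submodule A (ℤ → A) where
  carrier := {f | Tendsto f atBot (𝓝 0)}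
  add_mem' hf hg := by simpa [Pi.add_def] using Tendsto.add hf hg
  zero_mem' := tendsto_const_nhds
  smul_mem' c _ hf := by simpa [Pi.smul_def] using Tendsto.const_mul c hf

namespace LaurentCoeff

section Topological

variable {A : Type*} [CommRing A] [TopologicalSpace A] [IsTopologicalRing A]

/-- The substitution `T ↦ T ^ n`, moving the coefficient at `j` to `n * j`. -/
def expand (n : ℕ) : LaurentCoeff A →ₗ[A] LaurentCoeff A where
  toFun f := ⟨fun k => if (n : ℤ) ∣ k then f.1 (k / n) else 0, by
    refine fun s hs => mem_map.2 ?_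
    obtain ⟨N, hN⟩ := eventually_atBot.1 (f.2 hs)
    filter_upwards [eventually_le_atBot (n * N), eventually_lt_atBot 0] with k hk hk0
    by_cases hd : (n : ℤ) ∣ k
    · obtain ⟨j, rfl⟩ := hd
      have hn : (0 : ℤ) < n := by
        refine lt_of_le_of_ne n.cast_nonneg fun h => ?_
        simp [← h] at hk0
      simpa [Int.mul_ediv_cancel_left j hn.ne'] using hN j (le_of_mul_le_mul_left hk hn)
    · simpa [hd] using mem_of_mem_nhds hs⟩
  map_add' f g := by
    ext k
    by_cases hd : (n : ℤ) ∣ k <;> simp [hd]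
  map_smul' c f := by
    ext k
    simp

lemma expand_apply_mul {n : ℕ} (hn : n ≠ 0) (f : LaurentCoeff A) (j : ℤ) :
    (expand n f).1 (n * j) = f.1 j := by
  simp [expand, hn]

lemma expand_apply_of_not_dvd {n : ℕ} {k : ℤ} (hk : ¬(n : ℤ) ∣ k) (f : LaurentCoeff A) :
    (expand n f).1 k = 0 :=
  if_neg hk

variable (A) in
/-- The series without terms in the degrees belonging to `s`. -/
def vanishingOn (s : Set ℤ) : Submodule A (LaurentCoeff A) where
  carrier := {f | ∀ k ∈ s, f.1 k = 0}
  add_mem' hf hg k hk := by simp [hf k hk, hg k hk]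
  zero_mem' _ _ := rfl
  smul_mem' c _ hf k hk := by simp [hf k hk]

/-- The degrees that do not occur in `(Ξ ∩ Λ∧⁻) ⊕ ℤ_l` when `n = l`: all but `0` and the negative
integers not divisible by `n`. -/
def relationDegrees (n : ℕ) : Set ℤ := {k | k ≠ 0 ∧ ((n : ℤ) ∣ k ∨ 0 ≤ k)}

/-- The map `(v, y) ↦ v + (1 - ψ) y`, where `v` ranges over the proposed complement of the image
of `1 - ψ` and `y` over the series without constant term. For `n = l`, its bijectivity contains
both the computation of the kernel of `1 - ψ` and that of its cokernel. -/
def addOneSub (n : ℕ) (ψ : LaurentCoeff A →ₗ[A] LaurentCoeff A) :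
    vanishingOn A (relationDegrees n) × vanishingOn A {0} →ₗ[A] LaurentCoeff A :=
  (Submodule.subtype _).coprod ((LinearMap.id - ψ) ∘ₗ Submodule.subtype _)

lemma addOneSub_apply (n : ℕ) (ψ : LaurentCoeff A →ₗ[A] LaurentCoeff A)
    (x : vanishingOn A (relationDegrees n) × vanishingOn A {0}) :
    addOneSub n ψ x = x.1 + (x.2 - ψ x.2) := rfl

lemma pos_or_exists_neg_mul_of_mem_relationDegrees {n : ℕ} {k : ℤ} (hk : k ∈ relationDegrees n) :
    0 < k ∨ ∃ j < 0, k = n * j := by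
  obtain ⟨hk0, ⟨j, rfl⟩ | hk⟩ := hk
  · refine (lt_or_gt_of_ne hk0).symm.imp_right fun hneg => ⟨j, ?_, rfl⟩
    exact neg_of_mul_neg_right hneg n.cast_nonneg
  · exact Or.inl (by omega)

lemma mul_mem_relationDegrees {n : ℕ} (hn : n ≠ 0) {j : ℤ} (hj : j ≠ 0) :
    (n : ℤ) * j ∈ relationDegrees n :=
  ⟨by positivity, Or.inl (dvd_mul_right _ _)⟩

lemma mem_relationDegrees_of_pos {n : ℕ} {k : ℤ} (hk : 0 < k) : k ∈ relationDegrees n :=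
  ⟨hk.ne', Or.inr hk.le⟩

section Injective

variable {n : ℕ} {y : LaurentCoeff A}

lemma apply_eq_zero_of_sub_expand_apply_eq_zero_of_pos (hn : 1 < n)
    (hy : ∀ k, 0 < k → y.1 k - (expand n y).1 k = 0) {k : ℤ} (hk : 0 < k) : y.1 k = 0 := by
  induction k using Int.strongRec (m := 1) with
  | lt k hk' => omega
  | ge k _ ih =>
    rw [sub_eq_zero.1 (hy k hk)]
    by_cases hd : (n : ℤ) ∣ k
    · obtain ⟨j, rfl⟩ := hd
      have hj : 0 < j := pos_of_mul_pos_right hk n.cast_nonneg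
      rw [expand_apply_mul (by omega)]
      exact ih j (by nlinarith) hj
    · exact expand_apply_of_not_dvd hd y

lemma tendsto_pow_mul_atBot (hn : 1 < n) {k : ℤ} (hk : k < 0) :
    Tendsto (fun i : ℕ => (n : ℤ) ^ i * k) atTop atBot := by
  have h := tendsto_pow_atTop_atTop_of_one_lt (r := (n : ℤ)) (by exact_mod_cast hn)
  rw [← tendsto_neg_atTop_iff]
  simpa using h.atTop_mul_const' (neg_pos.2 hk)

/-- The relation in degree `n * k` reads `y_{n k} = y_k`, so `y_k = y_{n ^ i k} → 0`. -/
lemma apply_eq_zero_of_sub_expand_apply_eq_zero_of_neg [T2Space A] (hn : 1 < n)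
    (hy : ∀ k < 0, y.1 (n * k) - (expand n y).1 (n * k) = 0) {k : ℤ} (hk : k < 0) :
    y.1 k = 0 := by
  have hiter : ∀ i : ℕ, y.1 ((n : ℤ) ^ i * k) = y.1 k := by
    intro i
    induction i with
    | zero => simp
    | succ i ih =>
      have hrel := hy ((n : ℤ) ^ i * k) (mul_neg_of_pos_of_neg (by positivity) hk)
      rw [expand_apply_mul (by omega), ih, ← mul_assoc, ← pow_succ'] at hrel
      exact sub_eq_zero.1 hrel
  refine tendsto_nhds_unique (f := fun i : ℕ => y.1 ((n : ℤ) ^ i * k)) ?_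
    (y.2.comp (tendsto_pow_mul_atBot hn hk))
  simp only [hiter, tendsto_const_nhds]

theorem injective_addOneSub_expand [T2Space A] (hn : 1 < n) :
    Function.Injective (addOneSub n (expand (A := A) n)) := by
  rw [injective_iff_map_eq_zero]
  rintro ⟨⟨v, hv⟩, ⟨y, hy⟩⟩ hvy
  rw [addOneSub_apply] at hvy
  have hrel : ∀ k ∈ relationDegrees n, y.1 k - (expand n y).1 k = 0 := fun k hk => by
    simpa [hv k hk] using congrFun (congrArg Subtype.val hvy) k
  have hy0 : y = 0 := by
    ext k
    rcases lt_trichotomy k 0 with hk | rfl | hk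
    · exact apply_eq_zero_of_sub_expand_apply_eq_zero_of_neg hn
        (fun j hj => hrel _ (mul_mem_relationDegrees (by omega) hj.ne)) hk
    · exact hy 0 rfl
    · exact apply_eq_zero_of_sub_expand_apply_eq_zero_of_pos hn
        (fun j hj => hrel _ (mem_relationDegrees_of_pos hj)) hk
  subst hy0
  simpa using hvy

end Injective

section Solution

lemma expand_pow_apply_eq_zero {n : ℕ} (hn : 1 < n) (z : LaurentCoeff A) (i : ℕ) :
    ∀ k : ℤ, 0 < k → k ≤ i → ((expand n ^ i) z).1 k = 0 := by
  induction i with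
  | zero => intro k hk hki; omega
  | succ i ih =>
    intro k hk hki
    rw [pow_succ', Module.End.mul_apply]
    by_cases hd : (n : ℤ) ∣ k
    · obtain ⟨j, rfl⟩ := hd
      have hj : 0 < j := pos_of_mul_pos_right hk n.cast_nonneg
      rw [expand_apply_mul (by omega)]
      exact ih j hj (by push_cast at hki; nlinarith)
    · exact expand_apply_of_not_dvd hd _

/-- The solution `y` without constant term of `(1 - ψ) y = z` in the degrees belonging to
`relationDegrees n`, where `ψ` is the substitution `T ↦ T ^ n`: the series `∑_{i ≥ 0} ψ ^ i z` in
positive degrees, and `-∑_{i ≥ 1} θ ^ i z` in negative degrees, where `θ` is the left inverse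
`(a_k) ↦ (a_{n k})` of `ψ`. -/
noncomputable def expandSolution (n : ℕ) (z : LaurentCoeff A) (k : ℤ) : A :=
  if 0 < k then ∑' i : ℕ, ((expand n ^ i) z).1 k
  else if k < 0 then -∑' i : ℕ, z.1 ((n : ℤ) ^ (i + 1) * k) else 0

lemma expandSolution_of_pos {n : ℕ} {z : LaurentCoeff A} {k : ℤ} (hk : 0 < k) :
    expandSolution n z k = ∑' i : ℕ, ((expand n ^ i) z).1 k :=
  if_pos hk

lemma expandSolution_of_neg {n : ℕ} {z : LaurentCoeff A} {k : ℤ} (hk : k < 0) :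
    expandSolution n z k = -∑' i : ℕ, z.1 ((n : ℤ) ^ (i + 1) * k) := by
  rw [expandSolution, if_neg (by omega), if_pos hk]

lemma expandSolution_eq_add_tsum [T2Space A] {n : ℕ} (hn : 1 < n) (z : LaurentCoeff A) {k : ℤ}
    (hk : 0 < k) :
    expandSolution n z k = z.1 k + ∑' i : ℕ, (expand n ((expand n ^ i) z)).1 k := by
  have hsum : Summable fun i : ℕ => ((expand n ^ i) z).1 k :=
    summable_of_ne_finset_zero (s := Finset.range k.toNat) fun i hi =>
      expand_pow_apply_eq_zero hn z i k hk (by simpa using hi)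
  simp only [expandSolution_of_pos hk, hsum.tsum_eq_zero_add, pow_zero, Module.End.one_apply,
    pow_succ', Module.End.mul_apply]

lemma expandSolution_mul_of_pos [T2Space A] {n : ℕ} (hn : 1 < n) (z : LaurentCoeff A) {j : ℤ}
    (hj : 0 < j) :
    expandSolution n z (n * j) = z.1 (n * j) + expandSolution n z j := by
  rw [expandSolution_eq_add_tsum hn z (by positivity), expandSolution_of_pos hj]
  simp only [expand_apply_mul (show n ≠ 0 by omega)]

lemma expandSolution_of_not_dvd [T2Space A] {n : ℕ} (hn : 1 < n) (z : LaurentCoeff A) {k : ℤ}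
    (hk : 0 < k) (hd : ¬(n : ℤ) ∣ k) : expandSolution n z k = z.1 k := by
  simp only [expandSolution_eq_add_tsum hn z hk, expand_apply_of_not_dvd hd, tsum_zero, add_zero]

end Solution

end Topological

section Ultrametric

variable {A : Type*} [NormedCommRing A] [IsUltrametricDist A]

lemma expandSolution_mul_of_neg [CompleteSpace A] {n : ℕ} (hn : 1 < n) (z : LaurentCoeff A)
    {k : ℤ} (hk : k < 0) :
    expandSolution n z k = expandSolution n z (n * k) - z.1 (n * k) := by
  have hsum : Summable fun i : ℕ => z.1 ((n : ℤ) ^ (i + 1) * k) := by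
    refine NonarchimedeanAddGroup.summable_of_tendsto_cofinite_zero ?_
    rw [Nat.cofinite_eq_atTop]
    exact (z.2.comp (tendsto_pow_mul_atBot hn hk)).comp (tendsto_add_atTop_nat 1)
  have hnk : (n : ℤ) * k < 0 := mul_neg_of_pos_of_neg (by positivity) hk
  have hshift : ∀ i : ℕ, (n : ℤ) ^ (i + 1 + 1) * k = (n : ℤ) ^ (i + 1) * (n * k) := fun i => by ring
  rw [expandSolution_of_neg hk, expandSolution_of_neg hnk, hsum.tsum_eq_zero_add]
  simp only [hshift, zero_add, pow_one]
  ring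

lemma expandSolution_mem {n : ℕ} (hn : 1 < n) (z : LaurentCoeff A) :
    expandSolution n z ∈ LaurentCoeff A := by
  refine NormedAddGroup.tendsto_nhds_zero.2 fun ε hε => ?_
  obtain ⟨N, hN⟩ :=
    eventually_atBot.1 (NormedAddGroup.tendsto_nhds_zero.1 z.2 (ε / 2) (half_pos hε))
  filter_upwards [eventually_le_atBot N, eventually_lt_atBot 0] with k hkN hk
  rw [expandSolution_of_neg hk, norm_neg]
  refine (IsUltrametricDist.norm_tsum_le_of_forall_le fun i => (hN _ ?_).le).trans_lt
    (half_lt_self hε)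
  have hpow : (1 : ℤ) ≤ (n : ℤ) ^ (i + 1) := one_le_pow₀ (by exact_mod_cast hn.le)
  nlinarith

theorem surjective_addOneSub_expand [CompleteSpace A] {n : ℕ} (hn : 1 < n) :
    Function.Surjective (addOneSub n (expand (A := A) n)) := by
  intro z
  let y : LaurentCoeff A := ⟨expandSolution n z, expandSolution_mem hn z⟩
  have hy : y ∈ vanishingOn A {0} := by
    rintro _ rfl
    simp [y, expandSolution]
  have hv : z - (y - expand n y) ∈ vanishingOn A (relationDegrees n) := by
    intro k hk
    suffices z.1 k + (expand n y).1 k = expandSolution n z k by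
      simpa [y, sub_sub_eq_add_sub, sub_eq_zero] using this
    rcases pos_or_exists_neg_mul_of_mem_relationDegrees hk with hk | ⟨j, hj, rfl⟩
    · by_cases hd : (n : ℤ) ∣ k
      · obtain ⟨j, rfl⟩ := hd
        rw [expand_apply_mul (by omega),
          expandSolution_mul_of_pos hn z (pos_of_mul_pos_right hk n.cast_nonneg)]
      · rw [expand_apply_of_not_dvd hd, expandSolution_of_not_dvd hn z hk hd, add_zero]
    · rw [expand_apply_mul (by omega), add_comm]
      exact eq_sub_iff_add_eq.1 (expandSolution_mul_of_neg hn z hj)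
  refine ⟨⟨⟨_, hv⟩, ⟨y, hy⟩⟩, ?_⟩
  rw [addOneSub_apply]
  exact sub_add_cancel _ _

end Ultrametric

section PadicInt

open IsLocalRing

variable {p : ℕ} [Fact p.Prime]

lemma mem_maximalIdeal_pow_smul_top_iff {n : ℕ} {f : LaurentCoeff ℤ_[p]} :
    f ∈ (maximalIdeal ℤ_[p] ^ n • ⊤ : Submodule ℤ_[p] (LaurentCoeff ℤ_[p])) ↔
      ∀ k, f.1 k ∈ maximalIdeal ℤ_[p] ^ n := by
  simp only [PadicInt.maximalIdeal_eq_span_p, Ideal.span_singleton_pow,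
    Submodule.ideal_span_singleton_smul, Submodule.mem_smul_pointwise_iff_exists,
    Ideal.mem_span_singleton]
  constructor
  · rintro ⟨g, -, rfl⟩ k
    exact ⟨g.1 k, rfl⟩
  · intro hf
    choose g hg using hf
    have hp : ‖(p : ℤ_[p]) ^ n‖ ≠ 0 := by
      simpa using pow_ne_zero n (NeZero.ne (p : ℤ_[p]))
    have hnorm : ∀ k, ‖g k‖ = ‖(p : ℤ_[p]) ^ n‖⁻¹ * ‖f.1 k‖ := fun k => by
      rw [hg k, norm_mul, inv_mul_cancel_left₀ hp]
    have hg0 : g ∈ LaurentCoeff ℤ_[p] := by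
      refine tendsto_zero_iff_norm_tendsto_zero.2 ?_
      simpa [hnorm] using (tendsto_zero_iff_norm_tendsto_zero.1 f.2).const_mul _
    exact ⟨⟨g, hg0⟩, trivial, Subtype.ext (funext fun k => (hg k).symm)⟩

lemma smodEq_maximalIdeal_pow_smul_top_iff {n : ℕ} {f g : LaurentCoeff ℤ_[p]} :
    f ≡ g [SMOD (maximalIdeal ℤ_[p] ^ n • ⊤ : Submodule ℤ_[p] (LaurentCoeff ℤ_[p]))] ↔
      ∀ k, f.1 k ≡ g.1 k [SMOD (maximalIdeal ℤ_[p] ^ n • ⊤ : Ideal ℤ_[p])] := by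
  simp [SModEq.sub_mem, mem_maximalIdeal_pow_smul_top_iff]

lemma mem_of_forall_exists_smodEq {f : ℤ → ℤ_[p]}
    (hf : ∀ n, ∃ g : LaurentCoeff ℤ_[p], ∀ k,
      g.1 k ≡ f k [SMOD (maximalIdeal ℤ_[p] ^ n • ⊤ : Ideal ℤ_[p])]) :
    f ∈ LaurentCoeff ℤ_[p] := by
  refine NormedAddGroup.tendsto_nhds_zero.2 fun ε hε => ?_
  obtain ⟨n, hn⟩ := PadicInt.exists_pow_neg_lt p hε
  obtain ⟨g, hg⟩ := hf n
  filter_upwards [NormedAddGroup.tendsto_nhds_zero.1 g.2 ε hε] with k hk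
  have hfg : ‖f k - g.1 k‖ < ε := by
    have hmem := SModEq.sub_mem.1 (hg k).symm
    rw [smul_eq_mul, Ideal.mul_top, PadicInt.maximalIdeal_eq_span_p, Ideal.span_singleton_pow,
      ← PadicInt.norm_le_pow_iff_mem_span_pow] at hmem
    exact hmem.trans_lt hn
  simpa using (PadicInt.nonarchimedean (f k - g.1 k) (g.1 k)).trans_lt (max_lt hfg hk)

instance isAdicComplete_padicInt : IsAdicComplete (maximalIdeal ℤ_[p]) (LaurentCoeff ℤ_[p]) where
  haus' f hf := by
    ext k
    exact IsHausdorff.haus' (I := maximalIdeal ℤ_[p]) _ fun n =>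
      smodEq_maximalIdeal_pow_smul_top_iff.1 (hf n) k
  prec' f hf := by
    have hcoeff : ∀ k, ∃ a, ∀ n,
        (f n).1 k ≡ a [SMOD (maximalIdeal ℤ_[p] ^ n • ⊤ : Ideal ℤ_[p])] := fun k =>
      IsPrecomplete.prec' (fun n => (f n).1 k) fun hmn =>
        smodEq_maximalIdeal_pow_smul_top_iff.1 (hf hmn) k
    choose g hg using hcoeff
    have hg0 : g ∈ LaurentCoeff ℤ_[p] := mem_of_forall_exists_smodEq fun n => ⟨f n, fun k => hg k n⟩
    exact ⟨⟨g, hg0⟩, fun n => smodEq_maximalIdeal_pow_smul_top_iff.2 fun k => hg k n⟩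

theorem bijective_addOneSub {ψ : LaurentCoeff ℤ_[p] →ₗ[ℤ_[p]] LaurentCoeff ℤ_[p]}
    (hψ : ∀ f k, (p : ℤ_[p]) ∣ (ψ f).1 k - (expand p f).1 k) :
    Function.Bijective (addOneSub p ψ) := by
  have hp : 1 < p := (Fact.out : p.Prime).one_lt
  refine bijective_of_apply_sub_apply_mem_smul_top (I := maximalIdeal ℤ_[p])
    ⟨injective_addOneSub_expand hp, surjective_addOneSub_expand hp⟩ fun x => ?_
  rw [← pow_one (maximalIdeal ℤ_[p]), mem_maximalIdeal_pow_smul_top_iff]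
  intro k
  rw [pow_one, PadicInt.maximalIdeal_eq_span_p, Ideal.mem_span_singleton]
  simpa [addOneSub_apply] using (dvd_neg.2 (hψ x.2 k))

end PadicInt

end LaurentCoeff

section LaurentRing

variable {l : ℕ} [Fact l.Prime] {R : Type*} [CommRing R] [Algebra ℤ_[l] R]

/-- `R` is the ring `Λ∧` of series `x = ∑ (C k x) T ^ k` over `ℤ_l`, where `k` ranges over `ℤ` and
`C k x → 0` as `k → -∞`. The ring is described by its coefficient functions `C k` and its
variable `T`. -/
structure IsLaurentRing (C : ℤ → R → ℤ_[l]) (T : Rˣ) : Prop where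
  ext : ∀ x y : R, (∀ k, C k x = C k y) → x = y
  exists_coeff_eq : ∀ f : ℤ → ℤ_[l], Tendsto f atBot (𝓝 0) → ∃ x : R, ∀ k, C k x = f k
  tendsto_coeff : ∀ x : R, Tendsto (fun k => C k x) atBot (𝓝 0)
  coeff_add : ∀ x y : R, ∀ k, C k (x + y) = C k x + C k y
  coeff_mul : ∀ x y : R, ∀ k, C k (x * y) = ∑' i : ℤ, C i x * C (k - i) y
  coeff_algebraMap : ∀ (a : ℤ_[l]) (k : ℤ), C k (algebraMap ℤ_[l] R a) = if k = 0 then a else 0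
  coeff_T : ∀ k, C k (T : R) = if k = 1 then 1 else 0

namespace IsLaurentRing

variable {C : ℤ → R → ℤ_[l]} {T : Rˣ}

lemma coeff_smul (h : IsLaurentRing C T) (a : ℤ_[l]) (x : R) (k : ℤ) :
    C k (a • x) = a * C k x := by
  rw [Algebra.smul_def, h.coeff_mul, tsum_eq_single 0 fun i hi => by simp [h.coeff_algebraMap, hi]]
  simp [h.coeff_algebraMap]

/-- The identification of `Λ∧` with its module of coefficient families. -/
noncomputable def coeffEquiv (h : IsLaurentRing C T) : R ≃ₗ[ℤ_[l]] LaurentCoeff ℤ_[l] :=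
  LinearEquiv.ofBijective
    { toFun x := ⟨fun k => C k x, h.tendsto_coeff x⟩
      map_add' x y := Subtype.ext (funext (h.coeff_add x y))
      map_smul' a x := Subtype.ext (funext (h.coeff_smul a x)) }
    ⟨fun x y hxy => h.ext x y (congrFun (congrArg Subtype.val hxy)),
      fun f => (h.exists_coeff_eq f.1 f.2).imp fun _ hx => Subtype.ext (funext hx)⟩

lemma coeffEquiv_apply (h : IsLaurentRing C T) (x : R) (k : ℤ) :
    (h.coeffEquiv x).1 k = C k x := rfl

lemma coeff_zero (h : IsLaurentRing C T) (k : ℤ) : C k 0 = 0 := by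
  simp [← h.coeffEquiv_apply]

lemma coeff_sub (h : IsLaurentRing C T) (x y : R) (k : ℤ) : C k (x - y) = C k x - C k y := by
  simp [← h.coeffEquiv_apply]

lemma coeff_neg (h : IsLaurentRing C T) (x : R) (k : ℤ) : C k (-x) = -C k x := by
  simp [← h.coeffEquiv_apply]

lemma coeff_one (h : IsLaurentRing C T) (k : ℤ) : C k 1 = if k = 0 then 1 else 0 := by
  simpa using h.coeff_algebraMap 1 k

lemma algebraMap_injective (h : IsLaurentRing C T) : Function.Injective (algebraMap ℤ_[l] R) :=
  fun a b hab => by simpa [h.coeff_algebraMap] using congrArg (C 0) hab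

lemma coeff_T_mul (h : IsLaurentRing C T) (x : R) (k : ℤ) : C k (T * x) = C (k - 1) x := by
  rw [h.coeff_mul, tsum_eq_single 1 fun i hi => by simp [h.coeff_T, hi]]
  simp [h.coeff_T]

lemma coeff_T_inv_mul (h : IsLaurentRing C T) (x : R) (k : ℤ) :
    C k ((T⁻¹ : Rˣ) * x) = C (k + 1) x := by
  simpa using (h.coeff_T_mul ((T⁻¹ : Rˣ) * x) (k + 1)).symm

lemma coeff_T_zpow_mul (h : IsLaurentRing C T) (n : ℤ) (x : R) (k : ℤ) :
    C k ((T ^ n : Rˣ) * x) = C (k - n) x := by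
  induction n generalizing k with
  | zero => simp
  | succ n ih =>
    rw [zpow_add_one, mul_comm (T ^ (n : ℤ)), Units.val_mul, mul_assoc, h.coeff_T_mul, ih, sub_sub,
      add_comm 1]
  | pred n ih =>
    rw [zpow_sub_one, mul_comm (T ^ (-n : ℤ)), Units.val_mul, mul_assoc, h.coeff_T_inv_mul, ih,
      sub_sub_eq_add_sub, add_sub_right_comm]

lemma coeff_T_zpow (h : IsLaurentRing C T) (n k : ℤ) :
    C k (T ^ n : Rˣ) = if k = n then 1 else 0 := by
  simpa [h.coeff_one, sub_eq_zero] using h.coeff_T_zpow_mul n 1 k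

lemma dvd_coeff_of_mem_span (h : IsLaurentRing C T) {x : R} (hx : x ∈ Ideal.span {(l : R)})
    (k : ℤ) : (l : ℤ_[l]) ∣ C k x := by
  obtain ⟨w, rfl⟩ := Ideal.mem_span_singleton.1 hx
  refine ⟨C k w, ?_⟩
  rw [← h.coeff_smul, Algebra.smul_def, map_natCast]

/-- The subring `Λ` of series without negative powers of `T`. -/
def powerSeriesSubring (h : IsLaurentRing C T) : Subring R where
  carrier := {x | ∀ k < 0, C k x = 0}
  zero_mem' k _ := h.coeff_zero k
  one_mem' k hk := by simp [h.coeff_one, hk.ne]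
  add_mem' hx hy k hk := by rw [h.coeff_add, hx k hk, hy k hk, add_zero]
  neg_mem' hx k hk := by rw [h.coeff_neg, hx k hk, neg_zero]
  mul_mem' {x y} hx hy k hk := by
    rw [h.coeff_mul]
    refine (tsum_congr fun i => ?_).trans tsum_zero
    rcases lt_or_ge i 0 with hi | hi
    · rw [hx i hi, zero_mul]
    · rw [hy (k - i) (by omega), mul_zero]

lemma T_mem_powerSeriesSubring (h : IsLaurentRing C T) : (T : R) ∈ h.powerSeriesSubring :=
  fun k hk => by rw [h.coeff_T, if_neg (by omega)]

end IsLaurentRing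

lemma padicInt_pow_dvd_tsum {ι : Type*} [Nonempty ι] {f : ι → ℤ_[l]} {n : ℕ}
    (hf : ∀ i, (l : ℤ_[l]) ^ n ∣ f i) : (l : ℤ_[l]) ^ n ∣ ∑' i, f i := by
  simp only [← Ideal.mem_span_singleton, ← PadicInt.norm_le_pow_iff_mem_span_pow] at hf ⊢
  exact IsUltrametricDist.norm_tsum_le_of_forall_le hf

/-- `ψ` is the endomorphism of `Λ∧` substituting `g = (1 + T) ^ l - 1` for `T`. -/
structure IsFrobeniusSubstitution (C : ℤ → R → ℤ_[l]) (T g : Rˣ) (ψ : R →+* R) : Prop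
    extends IsLaurentRing C T where
  val_eq : (g : R) = (1 + (T : R)) ^ l - 1
  coeff_map : ∀ (x : R) (k : ℤ), C k (ψ x) = ∑' m : ℤ, C m x * C k ((g ^ m : Rˣ) : R)

namespace IsFrobeniusSubstitution

variable {C : ℤ → R → ℤ_[l]} {T g : Rˣ} {ψ : R →+* R}

lemma exists_eq_T_mul (h : IsFrobeniusSubstitution C T g ψ) :
    ∃ u ∈ h.powerSeriesSubring, (g : R) = T * u := by
  refine ⟨∑ i ∈ Finset.range l, (1 + (T : R)) ^ i, sum_mem fun i _ => pow_mem
    (add_mem (one_mem _) h.T_mem_powerSeriesSubring) i, ?_⟩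
  rw [h.val_eq, ← geom_sum_mul, add_sub_cancel_left, mul_comm]

lemma coeff_pow_eq_zero (h : IsFrobeniusSubstitution C T g ψ) {m : ℕ} {k : ℤ} (hk : k < m) :
    C k ((g : R) ^ m) = 0 := by
  obtain ⟨u, hu, hg⟩ := h.exists_eq_T_mul
  have hcoeff := h.coeff_T_zpow_mul m (u ^ m) k
  rw [zpow_natCast, Units.val_pow_eq_pow_val, ← mul_pow, ← hg] at hcoeff
  rw [hcoeff]
  exact pow_mem hu m _ (by omega)

lemma zpow_sub_T_zpow_mem_span (h : IsFrobeniusSubstitution C T g ψ) (m : ℤ) :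
    ((g ^ m : Rˣ) : R) - (T ^ (l * m) : Rˣ) ∈ Ideal.span {(l : R)} := by
  obtain ⟨r, hr⟩ := exists_add_pow_prime_eq (Fact.out : l.Prime) (1 : R) (T : R)
  let q : R →* R ⧸ Ideal.span {(l : R)} := Ideal.Quotient.mk (Ideal.span {(l : R)})
  have hunit : Units.map q g = Units.map q (T ^ l) := by
    ext
    refine Ideal.Quotient.eq.2 (Ideal.mem_span_singleton.2 ⟨T * r, ?_⟩)
    rw [h.val_eq, hr, Units.val_pow_eq_pow_val]
    ring
  have hpow : Units.map q (g ^ m) = Units.map q (T ^ (l * m)) := by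
    rw [map_zpow, hunit, ← map_zpow, ← zpow_natCast, ← zpow_mul]
  exact Ideal.Quotient.eq.1 (congrArg Units.val hpow)

lemma dvd_coeff_zpow_sub (h : IsFrobeniusSubstitution C T g ψ) (m k : ℤ) :
    (l : ℤ_[l]) ∣ C k (g ^ m : Rˣ) - if k = l * m then 1 else 0 := by
  rw [← h.coeff_T_zpow, ← h.coeff_sub]
  exact h.dvd_coeff_of_mem_span (h.zpow_sub_T_zpow_mem_span m) k

lemma summable_coeff_mul_coeff_zpow (h : IsFrobeniusSubstitution C T g ψ) (x : R) (k : ℤ) :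
    Summable fun m : ℤ => C m x * C k (g ^ m : Rˣ) := by
  refine NonarchimedeanAddGroup.summable_of_tendsto_cofinite_zero ?_
  rw [Int.cofinite_eq, tendsto_sup]
  constructor
  · refine squeeze_zero_norm (fun m => ?_)
      (tendsto_zero_iff_norm_tendsto_zero.1 (h.tendsto_coeff x))
    rw [norm_mul]
    exact mul_le_of_le_one_right (norm_nonneg _) (PadicInt.norm_le_one _)
  · refine tendsto_const_nhds.congr' ?_
    filter_upwards [eventually_gt_atTop k, eventually_ge_atTop 0] with m hm hm0
    lift m to ℕ using hm0
    rw [zpow_natCast, Units.val_pow_eq_pow_val, h.coeff_pow_eq_zero hm, mul_zero]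

/-- `ψ` lifts `T ↦ T ^ l` because `(1 + T) ^ l - 1 ≡ T ^ l` modulo `l`. -/
lemma dvd_coeff_map_sub_expand (h : IsFrobeniusSubstitution C T g ψ) (x : R) (k : ℤ) :
    (l : ℤ_[l]) ∣ C k (ψ x) - (LaurentCoeff.expand l (h.coeffEquiv x)).1 k := by
  have hl : l ≠ 0 := NeZero.ne l
  have hexpand : HasSum (fun m : ℤ => C m x * if k = l * m then 1 else 0)
      ((LaurentCoeff.expand l (h.coeffEquiv x)).1 k) := by
    by_cases hd : (l : ℤ) ∣ k
    · obtain ⟨j, rfl⟩ := hd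
      rw [LaurentCoeff.expand_apply_mul hl, h.coeffEquiv_apply]
      simpa using hasSum_single (f := fun m : ℤ => C m x * if (l : ℤ) * j = l * m then 1 else 0) j
        fun m hm => by simp [hl, hm.symm]
    · have hne : ∀ m : ℤ, k ≠ l * m := fun m hm => hd ⟨m, hm⟩
      simp [LaurentCoeff.expand_apply_of_not_dvd hd, hne]
  rw [h.coeff_map, ← hexpand.tsum_eq,
    ← (h.summable_coeff_mul_coeff_zpow x k).tsum_sub hexpand.summable, ← pow_one (l : ℤ_[l])]
  refine padicInt_pow_dvd_tsum fun m => ?_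
  rw [pow_one, ← mul_sub]
  exact (h.dvd_coeff_zpow_sub m k).mul_left _

lemma map_algebraMap (h : IsFrobeniusSubstitution C T g ψ) (a : ℤ_[l]) :
    ψ (algebraMap ℤ_[l] R a) = algebraMap ℤ_[l] R a := by
  refine h.ext _ _ fun k => ?_
  rw [h.coeff_map, tsum_eq_single 0 fun m hm => by simp [h.coeff_algebraMap, hm]]
  simp [h.coeff_algebraMap, h.coeff_one]

/-- `ψ` as an endomorphism of the module of coefficient families. -/
noncomputable def coeffEnd (h : IsFrobeniusSubstitution C T g ψ) :
    LaurentCoeff ℤ_[l] →ₗ[ℤ_[l]] LaurentCoeff ℤ_[l] :=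
  h.coeffEquiv.conj
    { toFun := ψ
      map_add' := map_add ψ
      map_smul' a x := by simp [Algebra.smul_def, h.map_algebraMap] }

lemma coeffEnd_coeffEquiv (h : IsFrobeniusSubstitution C T g ψ) (x : R) :
    h.coeffEnd (h.coeffEquiv x) = h.coeffEquiv (ψ x) := by
  simp [coeffEnd, LinearEquiv.conj_apply_apply]

lemma bijective_addOneSub_coeffEnd (h : IsFrobeniusSubstitution C T g ψ) :
    Function.Bijective (LaurentCoeff.addOneSub l h.coeffEnd) := by
  refine LaurentCoeff.bijective_addOneSub fun f k => ?_
  obtain ⟨x, rfl⟩ := h.coeffEquiv.surjective f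
  rw [h.coeffEnd_coeffEquiv]
  exact h.dvd_coeff_map_sub_expand x k

lemma eq_zero_and_eq_algebraMap_of_add_sub_map_eq_zero (h : IsFrobeniusSubstitution C T g ψ)
    {v y : R} (hv : ∀ k ∈ LaurentCoeff.relationDegrees l, C k v = 0)
    (hvy : v + (y - ψ y) = 0) : v = 0 ∧ y = algebraMap ℤ_[l] R (C 0 y) := by
  set y₀ := y - algebraMap ℤ_[l] R (C 0 y) with hy₀
  have hy₀_mem : h.coeffEquiv y₀ ∈ LaurentCoeff.vanishingOn ℤ_[l] {0} := by
    rintro _ rfl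
    simp [h.coeffEquiv_apply, hy₀, h.coeff_algebraMap]
  have hv_mem : h.coeffEquiv v ∈ LaurentCoeff.vanishingOn ℤ_[l] (LaurentCoeff.relationDegrees l) :=
    hv
  have hzero : LaurentCoeff.addOneSub l h.coeffEnd (⟨_, hv_mem⟩, ⟨_, hy₀_mem⟩) = 0 := by
    rw [LaurentCoeff.addOneSub_apply, h.coeffEnd_coeffEquiv, ← map_sub, ← map_add, hy₀, map_sub,
      h.map_algebraMap, sub_sub_sub_cancel_right, hvy, map_zero]
  obtain ⟨hv_zero, hy₀_zero⟩ := Prod.mk_eq_zero.1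
    ((injective_iff_map_eq_zero _).1 h.bijective_addOneSub_coeffEnd.injective _ hzero)
  rw [Submodule.mk_eq_zero, LinearEquiv.map_eq_zero_iff] at hv_zero hy₀_zero
  exact ⟨hv_zero, sub_eq_zero.1 hy₀_zero⟩

lemma exists_eq_add_sub_map (h : IsFrobeniusSubstitution C T g ψ) (z : R) :
    ∃ v y : R, (∀ k ∈ LaurentCoeff.relationDegrees l, C k v = 0) ∧ z = v + (y - ψ y) := by
  obtain ⟨⟨⟨f, hf⟩, ⟨f', _⟩⟩, hsum⟩ := h.bijective_addOneSub_coeffEnd.surjective (h.coeffEquiv z)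
  obtain ⟨v, rfl⟩ := h.coeffEquiv.surjective f
  obtain ⟨y, rfl⟩ := h.coeffEquiv.surjective f'
  refine ⟨v, y, hf, h.coeffEquiv.injective ?_⟩
  rw [← hsum, LaurentCoeff.addOneSub_apply, h.coeffEnd_coeffEquiv, map_add, map_sub]

theorem ker_one_sub_eq_range_algebraMap (h : IsFrobeniusSubstitution C T g ψ) :
    {x : R | x - ψ x = 0} = Set.range (algebraMap ℤ_[l] R) := by
  ext x
  constructor
  · intro hx
    exact ⟨C 0 x, (h.eq_zero_and_eq_algebraMap_of_add_sub_map_eq_zero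
      (fun k _ => h.coeff_zero k) (by rwa [zero_add])).2.symm⟩
  · rintro ⟨a, rfl⟩
    simp [h.map_algebraMap]

theorem eq_and_eq_of_sub_mem_range (h : IsFrobeniusSubstitution C T g ψ) {x x' : R} {c c' : ℤ_[l]}
    (hx : ∀ k : ℤ, ((l : ℤ) ∣ k ∨ 0 ≤ k) → C k x = 0)
    (hx' : ∀ k : ℤ, ((l : ℤ) ∣ k ∨ 0 ≤ k) → C k x' = 0)
    (hmem : (x + algebraMap ℤ_[l] R c) - (x' + algebraMap ℤ_[l] R c') ∈
      Set.range (fun y : R => y - ψ y)) :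
    x = x' ∧ c = c' := by
  obtain ⟨y, hy⟩ := hmem
  have hdiff : (x - x') + algebraMap ℤ_[l] R (c - c') = 0 := by
    refine (h.eq_zero_and_eq_algebraMap_of_add_sub_map_eq_zero (y := -y) (fun k hk => ?_) ?_).1
    · simp [h.coeff_add, h.coeff_sub, h.coeff_algebraMap, hx k hk.2, hx' k hk.2, hk.1]
    · rw [map_neg, map_sub]
      linear_combination -hy
  have hc : c - c' = 0 := by
    simpa [h.coeff_add, h.coeff_sub, h.coeff_algebraMap, h.coeff_zero, hx 0 (Or.inr le_rfl),
      hx' 0 (Or.inr le_rfl)] using congrArg (C 0) hdiff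
  rw [hc, map_zero, add_zero] at hdiff
  exact ⟨sub_eq_zero.1 hdiff, sub_eq_zero.1 hc⟩

theorem exists_eq_add_algebraMap_add_sub_map (h : IsFrobeniusSubstitution C T g ψ) (z : R) :
    ∃ (x : R) (c : ℤ_[l]) (y : R), (∀ k : ℤ, ((l : ℤ) ∣ k ∨ 0 ≤ k) → C k x = 0) ∧
      z = x + algebraMap ℤ_[l] R c + (y - ψ y) := by
  obtain ⟨v, y, hv, rfl⟩ := h.exists_eq_add_sub_map z
  refine ⟨v - algebraMap ℤ_[l] R (C 0 v), C 0 v, y, fun k hk => ?_, by rw [sub_add_cancel]⟩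
  rw [h.coeff_sub, h.coeff_algebraMap]
  rcases eq_or_ne k 0 with rfl | hk0
  · simp
  · simp [hk0, hv k ⟨hk0, hk⟩]

end IsFrobeniusSubstitution

theorem statement16_general {C : ℤ → R → ℤ_[l]} {T g : Rˣ} {ψ : R →+* R}
    (h : IsFrobeniusSubstitution C T g ψ) :
    Function.Injective (algebraMap ℤ_[l] R) ∧
    {x : R | x - ψ x = 0} = Set.range (algebraMap ℤ_[l] R) ∧
    (∀ (x x' : R) (c c' : ℤ_[l]),
      (∀ k : ℤ, ((l : ℤ) ∣ k ∨ 0 ≤ k) → C k x = 0) →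
      (∀ k : ℤ, ((l : ℤ) ∣ k ∨ 0 ≤ k) → C k x' = 0) →
      ((x + algebraMap ℤ_[l] R c) - (x' + algebraMap ℤ_[l] R c') ∈
        Set.range (fun y : R => y - ψ y)) →
      x = x' ∧ c = c') ∧
    (∀ z : R, ∃ (x : R) (c : ℤ_[l]) (y : R),
      (∀ k : ℤ, ((l : ℤ) ∣ k ∨ 0 ≤ k) → C k x = 0) ∧
      z = x + algebraMap ℤ_[l] R c + (y - ψ y)) :=
  ⟨h.algebraMap_injective, h.ker_one_sub_eq_range_algebraMap,
    fun _ _ _ _ hx hx' hmem => h.eq_and_eq_of_sub_mem_range hx hx' hmem,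
    h.exists_eq_add_algebraMap_add_sub_map⟩

end LaurentRing

/-- **Lemma 3.**  The sequence
`0 → ℤ_l → Λ∧ →(1−ψ)→ Λ∧ → (Ξ/Ξ₁) ⊕ ℤ_l → 0` is exact:  `ℤ_l → Λ∧` is injective,
the kernel of `1 − ψ` is exactly the constants `ℤ_l`, and the map
`(Ξ ∩ Λ∧⁻) ⊕ ℤ_l → Λ∧/(1−ψ)Λ∧`, `(x, c) ↦ x + c mod (1−ψ)Λ∧`, is an isomorphism
onto the cokernel of `1 − ψ` (note `Ξ/Ξ₁ ≅ Ξ ∩ Λ∧⁻`). -/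
theorem statement16 (l : ℕ) [Fact (Nat.Prime l)] (hl : Odd l)
    -- `R` is the ring `Λ∧ = ℤ_l{{T}}`, the `l`-adic completion of the localization
    -- of `Λ = ℤ_l[[T]]` at the prime ideal `lΛ`, described concretely through its
    -- coefficient functions `C k : Λ∧ → ℤ_l` (`x = ∑_{k ∈ ℤ} (C k x)·T^k`,
    -- `C k x → 0` l-adically as `k → −∞`).
    (R : Type) [CommRing R] [Algebra ℤ_[l] R]
    (C : ℤ → R → ℤ_[l]) (Tu gu : Rˣ) (ψ : R →+* R)
    (hext : ∀ x y : R, (∀ k, C k x = C k y) → x = y)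
    (hsurj : ∀ f : ℤ → ℤ_[l], Tendsto f atBot (nhds 0) → ∃ x : R, ∀ k, C k x = f k)
    (htend : ∀ x : R, Tendsto (fun k => C k x) atBot (nhds 0))
    (hadd : ∀ x y : R, ∀ k, C k (x + y) = C k x + C k y)
    (hmul : ∀ x y : R, ∀ k, C k (x * y) = ∑' i : ℤ, C i x * C (k - i) y)
    (halg : ∀ (a : ℤ_[l]) (k : ℤ),
      C k (algebraMap ℤ_[l] R a) = if k = 0 then a else 0)
    (hT : ∀ k, C k (Tu : R) = if k = 1 then 1 else 0)
    (hgu : (gu : R) = (1 + (Tu : R)) ^ l - 1)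
    (hψ : ∀ (x : R) (k : ℤ),
      C k (ψ x) = ∑' m : ℤ, C m x * C k ((gu ^ m : Rˣ) : R)) :
    -- ℤ_l → Λ∧ is injective
    Function.Injective (algebraMap ℤ_[l] R) ∧
    -- the kernel of 1 − ψ is exactly the constants ℤ_l
    {x : R | x - ψ x = 0} = Set.range (algebraMap ℤ_[l] R) ∧
    -- (x, c) ↦ class of x + c is injective on (Ξ ∩ Λ∧⁻) ⊕ ℤ_l modulo (1−ψ)Λ∧ ...
    (∀ (x x' : R) (c c' : ℤ_[l]),
      (∀ k : ℤ, ((l : ℤ) ∣ k ∨ 0 ≤ k) → C k x = 0) →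
      (∀ k : ℤ, ((l : ℤ) ∣ k ∨ 0 ≤ k) → C k x' = 0) →
      ((x + algebraMap ℤ_[l] R c) - (x' + algebraMap ℤ_[l] R c') ∈
        Set.range (fun y : R => y - ψ y)) →
      x = x' ∧ c = c') ∧
    -- ... and surjective onto the cokernel of 1 − ψ
    (∀ z : R, ∃ (x : R) (c : ℤ_[l]) (y : R),
      (∀ k : ℤ, ((l : ℤ) ∣ k ∨ 0 ≤ k) → C k x = 0) ∧
      z = x + algebraMap ℤ_[l] R c + (y - ψ y)) :=
  statement16_general ⟨⟨hext, hsurj, htend, hadd, hmul, halg, hT⟩, hgu, hψ⟩
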